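/- Let (p_n)_{n≥1} be a Schauder decomposition of a complex Banach space X. Then (p_n) is R-Schauder if and only if for every nonincreasing sequence (b_n)_{n≥1} of positive real numbers, the multiplier operator B = M_b has the property that the set {exp(−tB) : t ≥ 0} is R-bounded. -/

import Mathlib

open Filter Topology NormedSpace

/-- Average over all sign vectors `(ε_1,…,ε_k) ∈ {−1,1}^k` of `‖∑_j ε_j v_j‖`. -/
noncomputable def signAvg {X : Type*} [NormedAddCommGroup X] [NormedSpace ℂ X]
    (k : ℕ) (v : Fin k → X) : ℝ :=
  (2 ^ k : ℝ)⁻¹ * ∑ ε : Fin k → Bool, ‖∑ j : Fin k, (if ε j then (1 : ℝ) else -1) • v j‖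

/-- A set of bounded operators on `X` is `R`-bounded. -/
def IsRBounded {X : Type*} [NormedAddCommGroup X] [NormedSpace ℂ X]
    (F : Set (X →L[ℂ] X)) : Prop :=
  ∃ C : ℝ, 0 ≤ C ∧ ∀ (k : ℕ) (T : Fin k → X →L[ℂ] X) (x : Fin k → X),
    (∀ j, T j ∈ F) → signAvg k (fun j => (T j) (x j)) ≤ C * signAvg k x

/-- `(p n)` is a Schauder decomposition of `X`: the `p n` are pairwise "orthogonal"
bounded projections whose partial sums converge pointwise to the identity.
(Indexing starts at `0`, corresponding to `n = 1` in the classical notation.) -/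
def IsSchauderDecomposition {X : Type*} [NormedAddCommGroup X] [NormedSpace ℂ X]
    (p : ℕ → X →L[ℂ] X) : Prop :=
  (∀ n, (p n).comp (p n) = p n) ∧
  (∀ m n, m ≠ n → (p m).comp (p n) = 0) ∧
  (∀ x : X, Tendsto (fun N => ∑ n ∈ Finset.range N, p n x) atTop (nhds x))

/-- The partial sum projection `P_N = ∑_{n<N} p_n`. -/
noncomputable def partialSum {X : Type*} [NormedAddCommGroup X] [NormedSpace ℂ X]
    (p : ℕ → X →L[ℂ] X) (N : ℕ) : X →L[ℂ] X :=
  ∑ n ∈ Finset.range N, p n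

section
variable {X : Type*} [NormedAddCommGroup X] [NormedSpace ℂ X]

lemma sa_add (k : ℕ) (v w : Fin k → X) : signAvg k (fun j => v j + w j) ≤ signAvg k v + signAvg k w := by
  unfold signAvg
  rw [← mul_add, ← Finset.sum_add_distrib]
  gcongr with ε
  simp only [smul_add, Finset.sum_add_distrib]
  exact norm_add_le _ _

lemma sa_nonneg (k : ℕ) (v : Fin k → X) : 0 ≤ signAvg k v := by
  unfold signAvg; positivity

lemma sa_map (k : ℕ) (v : Fin k → X) (T : X →L[ℂ] X) :
    signAvg k (fun j => T (v j)) ≤ ‖T‖ * signAvg k v := by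
  unfold signAvg
  rw [mul_left_comm]
  refine mul_le_mul_of_nonneg_left ?_ (by positivity)
  rw [Finset.mul_sum]
  refine Finset.sum_le_sum fun ε _ => ?_
  have : ∑ j : Fin k, (if ε j then (1 : ℝ) else -1) • T (v j)
      = T (∑ j : Fin k, (if ε j then (1 : ℝ) else -1) • v j) := by
    rw [map_sum]
    refine Finset.sum_congr rfl fun j _ => ?_
    split_ifs <;> simp
  rw [this]
  exact T.le_opNorm _

lemma sa_smul (k : ℕ) (v : Fin k → X) (a : ℝ) (ha : 0 ≤ a) :
    signAvg k (fun j => a • v j) = a * signAvg k v := by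
  unfold signAvg
  rw [mul_left_comm]
  congr 1
  rw [Finset.mul_sum]
  refine Finset.sum_congr rfl fun ε _ => ?_
  have : ∑ j : Fin k, (if ε j then (1 : ℝ) else -1) • (a • v j)
      = a • (∑ j : Fin k, (if ε j then (1 : ℝ) else -1) • v j) := by
    rw [Finset.smul_sum]
    refine Finset.sum_congr rfl fun j _ => smul_comm _ _ _
  rw [this, norm_smul, Real.norm_of_nonneg ha]

lemma sa_flip (k : ℕ) (v : Fin k → X) (s : Fin k → Bool) :
    signAvg k (fun j => (if s j then (1:ℝ) else -1) • v j) = signAvg k v := by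
  unfold signAvg
  congr 1
  let e : (Fin k → Bool) ≃ (Fin k → Bool) :=
    { toFun := fun ε j => (ε j == s j), invFun := fun ε j => (ε j == s j)
      left_inv := fun ε => by funext j; cases h : ε j <;> cases h' : s j <;> simp [h, h']
      right_inv := fun ε => by funext j; cases h : ε j <;> cases h' : s j <;> simp [h, h'] }
  refine Fintype.sum_equiv e _ _ fun ε => ?_
  congr 1
  refine Finset.sum_congr rfl fun j _ => ?_
  cases h : ε j <;> cases h' : s j <;> simp [e, h, h']

lemma sa_neg (k : ℕ) (v : Fin k → X) : signAvg k (fun j => - v j) = signAvg k v := by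
  simpa using sa_flip k v (fun _ => false)

lemma sa_contr (k : ℕ) (v : Fin k → X) (s : Fin k → Prop) [DecidablePred s] :
    signAvg k (fun j => if s j then v j else 0) ≤ signAvg k v := by
  have h : (fun j => if s j then v j else 0)
     = fun j => ((1/2:ℝ) • (v j + (if decide (s j) then (1:ℝ) else -1) • v j)) := by
    funext j
    by_cases hs : s j
    · simp only [hs, if_true, decide_true, one_smul, ← two_smul ℝ (v j), smul_smul]
      norm_num
    · simp [hs]
  rw [h, sa_smul k _ (1/2) (by norm_num)]
  have h2 := sa_add k v (fun j => (if decide (s j) then (1:ℝ) else -1) • v j)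
  have h3 := sa_flip k v (fun j => decide (s j))
  rw [h3] at h2
  linarith

lemma sa_sum {ι : Type*} (S : Finset ι) (k : ℕ) (v : ι → Fin k → X) :
    signAvg k (fun j => ∑ i ∈ S, v i j) ≤ ∑ i ∈ S, signAvg k (v i) := by
  classical
  induction S using Finset.induction_on with
  | empty => simp [signAvg]
  | insert a S ha ih =>
    simp only [Finset.sum_insert ha]
    exact (sa_add k _ _).trans (by gcongr)

lemma sa_tendsto (k : ℕ) (v : ℕ → Fin k → X) (w : Fin k → X)
    (h : ∀ j, Tendsto (fun n => v n j) atTop (𝓝 (w j))) :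
    Tendsto (fun n => signAvg k (v n)) atTop (𝓝 (signAvg k w)) := by
  unfold signAvg
  refine Tendsto.const_mul _ (tendsto_finsetSum _ fun ε _ => Tendsto.norm (tendsto_finsetSum _ fun j _ => ?_))
  exact (h j).const_smul _

lemma conv_RB (F : Set (X →L[ℂ] X)) (C : ℝ)
    (h : ∀ (k : ℕ) (T : Fin k → X →L[ℂ] X) (x : Fin k → X),
    (∀ j, T j ∈ F) → signAvg k (fun j => (T j) (x j)) ≤ C * signAvg k x)
    (k : ℕ) (T : Fin k → X →L[ℂ] X) (x : Fin k → X) (hT : ∀ j, T j ∈ convexHull ℝ F) :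
    signAvg k (fun j => (T j) (x j)) ≤ C * signAvg k x := by
  have hc : Convex ℝ {T : Fin k → X →L[ℂ] X | signAvg k (fun j => (T j) (x j)) ≤ C * signAvg k x} := by
    intro S hS T hT a b ha hb hab
    simp only [Set.mem_ofPred_eq] at *
    have h1 := sa_add k (fun j => a • (S j) (x j)) (fun j => b • (T j) (x j))
    rw [sa_smul k _ a ha, sa_smul k _ b hb] at h1
    have h2 : a * signAvg k (fun j => (S j) (x j)) + b * signAvg k (fun j => (T j) (x j))
      ≤ a * (C * signAvg k x) + b * (C * signAvg k x) := by gcongr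
    rw [← add_mul, hab, one_mul] at h2
    exact le_trans (by simpa using h1) h2
  have hsub : Set.pi Set.univ (fun _ : Fin k => F) ⊆
      {T : Fin k → X →L[ℂ] X | signAvg k (fun j => (T j) (x j)) ≤ C * signAvg k x} :=
    fun S hS => h k S x (fun j => hS j trivial)
  have := convexHull_min hsub hc
  rw [convexHull_pi] at this
  exact this (fun j _ => hT j)

lemma add_zero_RB (F : Set (X →L[ℂ] X)) (hF : F.Nonempty) (C : ℝ) (hC : 0 ≤ C)
    (h : ∀ (k : ℕ) (T : Fin k → X →L[ℂ] X) (x : Fin k → X),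
    (∀ j, T j ∈ F) → signAvg k (fun j => (T j) (x j)) ≤ C * signAvg k x)
    (k : ℕ) (T : Fin k → X →L[ℂ] X) (x : Fin k → X) (hT : ∀ j, T j ∈ insert 0 F) :
    signAvg k (fun j => (T j) (x j)) ≤ C * signAvg k x := by
  classical
  obtain ⟨S, hS⟩ := hF
  have h1 := h k (fun j => if T j ∈ F then T j else S) (fun j => if T j ∈ F then x j else 0)
    (fun j => by split_ifs with h <;> assumption)
  have h2 : (fun j => (if T j ∈ F then T j else S) (if T j ∈ F then x j else 0)) = fun j => T j (x j) := by
    funext j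
    by_cases hj : T j ∈ F
    · simp [hj]
    · have := (hT j).resolve_right hj
      rw [if_neg hj, if_neg hj, this]; simp
  rw [h2] at h1
  exact h1.trans (by gcongr; exact sa_contr k x _)

lemma U_mem (s : Set (X →L[ℂ] X)) (hs : Convex ℝ s) (z : ℕ → X →L[ℂ] X) (hz : ∀ n, z n ∈ s)
    (α : ℕ → ℝ) (hα : Antitone α) (h0 : α 0 = 1) (hn : ∀ n, 0 ≤ α n) (L : ℕ) :
    ∑ n ∈ Finset.range L, (α n - α (n+1)) • z n + α L • z L ∈ s := by
  have key := hs.sum_mem (t := Finset.range (L+1)) (w := fun n => if n < L then α n - α (n+1) else α L)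
    (z := z) (fun i _ => by
      split_ifs
      · exact sub_nonneg.2 (hα (Nat.le_succ i))
      · exact hn _) (by
      rw [Finset.sum_range_succ, Finset.sum_congr rfl (g := fun n => α n - α (n+1))
        (fun i hi => if_pos (Finset.mem_range.1 hi)), Finset.sum_range_sub' α L]
      simp [h0]) (fun i _ => hz i)
  rw [Finset.sum_range_succ, Finset.sum_congr rfl (g := fun n => (α n - α (n+1)) • z n)
        (fun i hi => by rw [if_pos (Finset.mem_range.1 hi)])] at key
  simpa using key

lemma U_eq (p : ℕ → X →L[ℂ] X) (α : ℕ → ℝ) (L : ℕ) :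
    ∑ n ∈ Finset.range L, (α n - α (n+1)) • partialSum p n + α L • partialSum p L
      = ∑ n ∈ Finset.range L, α (n+1) • p n := by
  induction L with
  | zero => simp [partialSum]
  | succ L ih =>
    rw [Finset.sum_range_succ, Finset.sum_range_succ, ← ih]
    simp only [partialSum, Finset.sum_range_succ]
    module

lemma exp_mul_aux [CompleteSpace X] (p A : X →L[ℂ] X) (c : ℂ) (h : p * A = c • p) :
    p * exp A = (exp c) • p := by
  have hk : ∀ n : ℕ, p * A ^ n = c ^ n • p := by
    intro n
    induction n with
    | zero => simp
    | succ n ih => rw [pow_succ, ← mul_assoc, ih, smul_mul_assoc, h, smul_smul, pow_succ]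
  have h1 := (NormedSpace.exp_series_hasSum_exp' (𝕂 := ℂ) A).mul_left p
  have h2 := (NormedSpace.exp_series_hasSum_exp' (𝕂 := ℂ) c).smul_const p
  refine h1.unique ?_
  have e : (fun n : ℕ => p * ((n.factorial : ℂ)⁻¹ • A ^ n)) =
      fun n : ℕ => ((n.factorial : ℂ)⁻¹ • c ^ n) • p := by
    funext n
    rw [mul_smul_comm, hk, smul_smul, smul_eq_mul]
  rw [e]
  exact h2

lemma pB (p : ℕ → X →L[ℂ] X) (hp : IsSchauderDecomposition p) (b : ℕ → ℝ) (B : X →L[ℂ] X)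
    (hB : ∀ x : X, Tendsto (fun N => ∑ n ∈ Finset.range N, ((b n : ℝ) : ℂ) • p n x)
            atTop (nhds (B x))) (m : ℕ) : p m * B = ((b m : ℝ) : ℂ) • p m := by
  ext x
  have h1 := ((p m).continuous.tendsto _).comp (hB x)
  refine tendsto_nhds_unique h1 ?_
  refine tendsto_const_nhds.congr' ?_
  filter_upwards [eventually_gt_atTop m] with N hN
  simp only [Function.comp, map_sum, map_smul]
  rw [Finset.sum_eq_single m]
  · have := congrArg (fun T => T x) (hp.1 m)
    simp only [ContinuousLinearMap.comp_apply] at this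
    rw [this]; rfl
  · intro n _ hn
    have := congrArg (fun T => T x) (hp.2.1 m n hn.symm)
    simp only [ContinuousLinearMap.comp_apply] at this
    rw [this]; simp
  · intro h; exact absurd (Finset.mem_range.2 hN) h

lemma exp_lim [CompleteSpace X] (p : ℕ → X →L[ℂ] X) (hp : IsSchauderDecomposition p) (b : ℕ → ℝ) (B : X →L[ℂ] X)
    (hB : ∀ x : X, Tendsto (fun N => ∑ n ∈ Finset.range N, ((b n : ℝ) : ℂ) • p n x)
            atTop (nhds (B x))) (t : ℝ) (x : X) :
    Tendsto (fun N => ∑ n ∈ Finset.range N, (Real.exp (-(t * b n))) • p n x) atTop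
      (𝓝 (exp (-((t : ℂ) • B)) x)) := by
  refine (hp.2.2 (exp (-((t : ℂ) • B)) x)).congr fun N => Finset.sum_congr rfl fun n _ => ?_
  have h := exp_mul_aux (p n) (-((t : ℂ) • B)) (-(t * b n : ℂ)) (by
    rw [mul_neg, mul_smul_comm, pB p hp b B hB, smul_smul, neg_smul])
  have h2 : p n (exp (-((t : ℂ) • B)) x) = exp (-(t * b n : ℂ)) • p n x :=
    congrArg (fun T => T x) h
  rw [h2, ← Complex.exp_eq_exp_ℂ, ← Complex.coe_smul]
  push_cast
  rfl

lemma pw1 (A m r : ℕ) : (2:ℝ)^m ≤ 2^(A+(m+r)) * (1/2)^A := by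
  have h1 : (2:ℝ)^A * (1/2)^A = 1 := by rw [← mul_pow]; norm_num
  have h2 : (2:ℝ)^(A+(m+r)) * (1/2)^A = 2^m * 2^r := by
    rw [pow_add, pow_add, mul_right_comm, h1, one_mul]
  rw [h2]
  exact le_mul_of_one_le_right (by positivity) (one_le_pow₀ (by norm_num))

lemma pw2 (A m r : ℕ) : (2:ℝ)^A * (1/2)^(A+(m+r)) ≤ (1/2)^m := by
  have h1 : (2:ℝ)^A * (1/2)^A = 1 := by rw [← mul_pow]; norm_num
  have h2 : (2:ℝ)^A * (1/2)^(A+(m+r)) = (1/2)^m * (1/2)^r := by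
    rw [pow_add, pow_add, ← mul_assoc, h1, one_mul]
  rw [h2]
  exact mul_le_of_le_one_right (by positivity) (pow_le_one₀ (by norm_num) (by norm_num))

lemma d_bound (N n : ℕ) : |Real.exp (-((2:ℝ)^(2*N^2) * ((1/2:ℝ)^(2*n^2+2*n)))) - (if n < N then 0 else 1)|
    ≤ (1/2)^N * (1/2)^n := by
  split_ifs with h
  · rw [sub_zero, abs_of_pos (Real.exp_pos _)]
    set s := (2:ℝ)^(2*N^2) * ((1/2:ℝ)^(2*n^2+2*n)) with hs
    have hge : (2:ℝ)^(N+n) ≤ s := by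
      obtain ⟨k, rfl⟩ := Nat.exists_eq_add_of_lt h
      have e : 2*(n+k+1)^2 = (2*n^2+2*n) + ((n+k+1+n) + (4*n*k + 2*k^2+3*k+1)) := by ring
      rw [hs, e]
      exact pw1 _ _ _
    have hpos : (0:ℝ) < 2^(N+n) := by positivity
    calc Real.exp (-s) = (Real.exp s)⁻¹ := Real.exp_neg s
      _ ≤ ((2:ℝ)^(N+n))⁻¹ := by
        apply inv_anti₀ hpos
        linarith [Real.add_one_le_exp s]
      _ = _ := by rw [← pow_add, one_div, inv_pow]
  · push Not at h
    set s := (2:ℝ)^(2*N^2) * ((1/2:ℝ)^(2*n^2+2*n)) with hs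
    have hle : s ≤ (1/2)^N * (1/2)^n := by
      obtain ⟨k, rfl⟩ := Nat.exists_eq_add_of_le h
      have e : 2*(N+k)^2 + 2*(N+k) = 2*N^2 + ((N+(N+k)) + (4*N*k + 2*k^2+k)) := by ring
      rw [hs, e, ← pow_add]
      exact pw2 _ _ _
    have hs0 : 0 ≤ s := by positivity
    rw [abs_sub_comm, abs_of_nonneg (by linarith [Real.exp_le_one_iff.2 (neg_nonpos.2 hs0)])]
    linarith [Real.add_one_le_exp (-s)]

end

lemma fwd {X : Type*} [NormedAddCommGroup X] [NormedSpace ℂ X] [CompleteSpace X]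
    (p : ℕ → X →L[ℂ] X) (hp : IsSchauderDecomposition p)
    (h : IsRBounded (Set.range fun N : ℕ => partialSum p (N + 1)))
    (b : ℕ → ℝ) (hb : Antitone b) (hpos : ∀ n, 0 < b n) (B : X →L[ℂ] X)
    (hB : ∀ x : X, Tendsto (fun N => ∑ n ∈ Finset.range N, ((b n : ℝ) : ℂ) • p n x)
            atTop (nhds (B x))) :
    IsRBounded {S : X →L[ℂ] X | ∃ t : ℝ, 0 ≤ t ∧ S = exp (-((t : ℂ) • B))} := by
  obtain ⟨C, hC, h⟩ := h
  refine ⟨1 + C, by positivity, fun k T x hT => ?_⟩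
  choose t ht0 ht using hT
  set G := insert (0 : X →L[ℂ] X) (Set.range fun N : ℕ => partialSum p (N + 1)) with hG
  have hGP : ∀ n, partialSum p n ∈ convexHull ℝ G := by
    intro n
    apply subset_convexHull
    cases n with
    | zero => left; simp [partialSum]
    | succ n => right; exact ⟨n, rfl⟩
  let α : Fin k → ℕ → ℝ := fun j n => Nat.casesOn n 1 (fun m => 1 - Real.exp (-(t j * b m)))
  have hα0 : ∀ j n, 0 ≤ α j n := by
    intro j n
    cases n with
    | zero => simp [α]
    | succ n =>
      have := mul_nonneg (ht0 j) (hpos n).le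
      simpa [α] using this
  have hα : ∀ j, Antitone (α j) := by
    intro j
    refine antitone_nat_of_succ_le fun n => ?_
    cases n with
    | zero => simp [α, Real.exp_nonneg]
    | succ n =>
      have := mul_le_mul_of_nonneg_left (hb (Nat.le_succ n)) (ht0 j)
      have h2 := Real.exp_le_exp.2 (neg_le_neg this)
      exact sub_le_sub_left h2 1
  let U : ℕ → Fin k → X →L[ℂ] X := fun L j => ∑ n ∈ Finset.range L, α j (n+1) • p n
  have hU : ∀ L j, U L j ∈ convexHull ℝ G := by
    intro L j
    have := U_mem _ (convex_convexHull ℝ G) (partialSum p) hGP (α j) (hα j) rfl (hα0 j) L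
    rwa [U_eq] at this
  have hb1 : ∀ L, signAvg k (fun j => x j - U L j (x j)) ≤ (1 + C) * signAvg k x := by
    intro L
    have h1 := sa_add k x (fun j => - U L j (x j))
    rw [sa_neg] at h1
    have h2 := conv_RB G C (fun k T x hT => add_zero_RB _ (Set.range_nonempty _) C hC h k T x hT)
      k (U L) x (hU L)
    simp only [← sub_eq_add_neg] at h1
    linarith
  refine le_of_tendsto (sa_tendsto k (fun L j => x j - U L j (x j)) _ fun j => ?_)
    (Eventually.of_forall hb1)
  rw [ht j]
  have h1 := ((tendsto_const_nhds (x := x j)).sub (hp.2.2 (x j))).add (exp_lim p hp b B hB (t j) (x j))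
  simp only [sub_self, zero_add] at h1
  refine h1.congr fun L => ?_
  rw [sub_add, ← Finset.sum_sub_distrib]
  congr 1
  simp only [U, ContinuousLinearMap.sum_apply, α]
  refine Finset.sum_congr rfl fun n _ => ?_
  rw [ContinuousLinearMap.smul_apply, sub_smul, one_smul]

lemma bwd {X : Type*} [NormedAddCommGroup X] [NormedSpace ℂ X] [CompleteSpace X]
    (p : ℕ → X →L[ℂ] X) (hp : IsSchauderDecomposition p)
    (h : ∀ b : ℕ → ℝ, Antitone b → (∀ n, 0 < b n) →
        ∀ B : X →L[ℂ] X,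
          (∀ x : X, Tendsto (fun N => ∑ n ∈ Finset.range N, ((b n : ℝ) : ℂ) • p n x)
            atTop (nhds (B x))) →
          IsRBounded {S : X →L[ℂ] X | ∃ t : ℝ, 0 ≤ t ∧ S = exp (-((t : ℂ) • B))}) :
    IsRBounded (Set.range fun N : ℕ => partialSum p (N + 1)) := by
  obtain ⟨M, hM⟩ : ∃ M, ∀ n, ‖p n‖ ≤ M := by
    refine banach_steinhaus fun x => ?_
    have h1 := (((tendsto_add_atTop_iff_nat 1).2 (hp.2.2 x)).sub (hp.2.2 x)).norm
    obtain ⟨C, hC⟩ := h1.bddAbove_range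
    refine ⟨C, fun n => ?_⟩
    have := hC ⟨n, rfl⟩
    simpa [Finset.sum_range_succ] using this
  have hM0 : 0 ≤ M := (norm_nonneg _).trans (hM 0)
  let b : ℕ → ℝ := fun n => (1/2:ℝ)^(2*n^2+2*n)
  have hbpos : ∀ n, 0 < b n := fun n => by positivity
  have hbanti : Antitone b := by
    intro m n hmn
    apply pow_le_pow_of_le_one (by norm_num) (by norm_num)
    gcongr
  have hg : Summable fun n : ℕ => (1/2:ℝ)^n := summable_geometric_two
  have hsum : Summable fun n => ((b n : ℝ) : ℂ) • p n := by
    refine Summable.of_norm_bounded (g := fun n => (1/2:ℝ)^n * M) (hg.mul_right M) fun n => ?_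
    rw [norm_smul, Complex.norm_real, Real.norm_of_nonneg (hbpos n).le]
    gcongr
    · apply pow_le_pow_of_le_one (by norm_num) (by norm_num)
      nlinarith
    · exact hM n
  obtain ⟨B, hBs⟩ := hsum
  have hB : ∀ x : X, Tendsto (fun N => ∑ n ∈ Finset.range N, ((b n : ℝ) : ℂ) • p n x)
            atTop (nhds (B x)) := by
    intro x
    have h1 := hBs.tendsto_sum_nat
    have h2 := ((ContinuousLinearMap.apply ℂ X x).continuous.tendsto _).comp h1
    simpa [Function.comp_def] using h2
  obtain ⟨C, hC, hR⟩ := h b hbanti hbpos B hB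
  let E : ℕ → X →L[ℂ] X := fun N => exp (-((((2:ℝ)^(2*N^2) : ℝ) : ℂ) • B))
  let D : ℕ → X →L[ℂ] X := fun N => E N - (1 - partialSum p N)
  have hD : ∀ N, ‖D N‖ ≤ (1/2)^N * (2 * M) := by
    intro N
    refine ContinuousLinearMap.opNorm_le_bound _ (by positivity) fun x => ?_
    have h1 := (exp_lim p hp b B hB ((2:ℝ)^(2*N^2)) x).sub ((hp.2.2 x).sub_const (partialSum p N x))
    have h2 : Tendsto (fun L => ∑ n ∈ Finset.range L,
        (Real.exp (-((2:ℝ)^(2*N^2) * b n)) - (if n < N then 0 else 1)) • p n x) atTop (𝓝 (D N x)) := by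
      refine h1.congr' ?_
      filter_upwards [eventually_ge_atTop N] with L hL
      simp only [sub_smul, Finset.sum_sub_distrib]
      congr 1
      rw [partialSum, ContinuousLinearMap.sum_apply]
      obtain ⟨q, rfl⟩ := Nat.exists_eq_add_of_le hL
      rw [Finset.sum_range_add, Finset.sum_range_add, add_sub_cancel_left,
        Finset.sum_eq_zero (s := Finset.range N), zero_add]
      · simp
      · intro i hi
        simp [Finset.mem_range.1 hi]
    refine le_of_tendsto h2.norm (Eventually.of_forall fun L => ?_)
    calc _ ≤ ∑ n ∈ Finset.range L, ((1/2)^N * (1/2)^n) * (M * ‖x‖) := by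
          refine norm_sum_le_of_le _ fun n _ => ?_
          rw [norm_smul, Real.norm_eq_abs]
          refine mul_le_mul (d_bound N n) ((p n).le_of_opNorm_le (hM n) x) (norm_nonneg _) (by positivity)
      _ = (1/2)^N * (∑ n ∈ Finset.range L, (1/2)^n) * (M * ‖x‖) := by
          rw [← Finset.sum_mul, ← Finset.mul_sum]
      _ ≤ (1/2)^N * 2 * (M * ‖x‖) := by
          gcongr
          exact sum_geometric_two_le L
      _ = _ := by ring
  refine ⟨1 + C + 2 * (2 * M), by positivity, fun k T x hT => ?_⟩
  choose N hN using hT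
  have e : (fun j => T j (x j)) = fun j => (x j + - (E (N j + 1) (x j))) + D (N j + 1) (x j) := by
    funext j
    rw [← hN j]
    simp only [D, ContinuousLinearMap.sub_apply, ContinuousLinearMap.one_apply]
    abel
  have hx := sa_nonneg k x
  have h1 := sa_add k (fun j => x j + - (E (N j + 1) (x j))) (fun j => D (N j + 1) (x j))
  have h2 := sa_add k x (fun j => - (E (N j + 1) (x j)))
  rw [sa_neg] at h2
  have h3 := hR k (fun j => E (N j + 1)) x (fun j => ⟨(2:ℝ)^(2*(N j + 1)^2), by positivity, rfl⟩)
  have h4 : signAvg k (fun j => D (N j + 1) (x j)) ≤ 2 * (2 * M) * signAvg k x := by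
    obtain ⟨L, hL⟩ : ∃ L, ∀ j, N j + 1 < L := by
      refine ⟨∑ j, (N j + 1) + 1, fun j => Nat.lt_succ_of_le ?_⟩
      exact Finset.single_le_sum (f := fun j => N j + 1) (fun _ _ => Nat.zero_le _) (Finset.mem_univ j)
    have e2 : (fun j => D (N j + 1) (x j)) =
        fun j => ∑ m ∈ Finset.range L, D m (if N j + 1 = m then x j else 0) := by
      funext j
      rw [Finset.sum_eq_single (N j + 1)]
      · simp
      · intro m _ hm; rw [if_neg hm.symm, map_zero]
      · intro hm; exact absurd (Finset.mem_range.2 (hL j)) hm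
    rw [e2]
    refine (sa_sum (Finset.range L) k (fun m j => D m (if N j + 1 = m then x j else 0))).trans ?_
    calc _ ≤ ∑ m ∈ Finset.range L, (1/2)^m * (2 * M) * signAvg k x := by
          refine Finset.sum_le_sum fun m _ => ?_
          refine (sa_map k (fun j => if N j + 1 = m then x j else 0) (D m)).trans ?_
          exact mul_le_mul (hD m) (sa_contr k x _) (sa_nonneg _ _) (by positivity)
      _ = (∑ m ∈ Finset.range L, (1/2)^m) * (2 * M) * signAvg k x := by
          rw [← Finset.sum_mul, ← Finset.sum_mul]
      _ ≤ _ := by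
          gcongr
          exact sum_geometric_two_le L
  rw [e]
  linarith

/-- A Schauder decomposition is `R`-Schauder iff for every nonincreasing positive
sequence `b`, the multiplier `B = M_b` has `{exp(−tB) : t ≥ 0}` `R`-bounded. -/
theorem statement13 {X : Type*} [NormedAddCommGroup X] [NormedSpace ℂ X] [CompleteSpace X]
    (p : ℕ → X →L[ℂ] X) (hp : IsSchauderDecomposition p) :
    IsRBounded (Set.range fun N : ℕ => partialSum p (N + 1)) ↔
      ∀ b : ℕ → ℝ, Antitone b → (∀ n, 0 < b n) →
        ∀ B : X →L[ℂ] X,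
          (∀ x : X, Tendsto (fun N => ∑ n ∈ Finset.range N, ((b n : ℝ) : ℂ) • p n x)
            atTop (nhds (B x))) →
          IsRBounded {S : X →L[ℂ] X | ∃ t : ℝ, 0 ≤ t ∧ S = exp (-((t : ℂ) • B))} := by
  exact ⟨fun h b hb hpos B hB => fwd p hp h b hb hpos B hB, bwd p hp⟩
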